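/- Let n ≥ 3 be an odd integer and let j be an odd integer with j ≢ n (mod 2n). Let φ be the ring endomorphism of ℤ[z_0, …, z_{2n−1}] sending z_a to −1 for each even a with 2 ≤ a ≤ 2n−2 and fixing the other variables. Then there exist ε ∈ {1,−1} and a monomial M in ℤ[z_0, …, z_{2n−1}] such that φ(R_n(F_{j,n+1})) = ε·M·(1+z_0)^{n+2}. -/

import Mathlib

open MvPolynomial
open scoped Classical

noncomputable section

/-- The set `Q_k`: triples `(r,s,t)` with `|r|+|s| ≤ k-2`, `r+s ≡ k (mod 2)`,
`t ≡ 2|s|-k+2 (mod 4)` and `2|s|-k+2 ≤ t ≤ k-2-2|r|`. -/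
def pentagramQ (k : ℤ) : Set (ℤ × ℤ × ℤ) :=
  {p | |p.1| + |p.2.1| ≤ k - 2 ∧ (2 : ℤ) ∣ (p.1 + p.2.1 - k) ∧
    (4 : ℤ) ∣ (p.2.2 - (2 * |p.2.1| - k + 2)) ∧
    2 * |p.2.1| - k + 2 ≤ p.2.2 ∧ p.2.2 ≤ k - 2 - 2 * |p.1|}

/-- The set `P_k = Q_k ∪ Q_{k+1}`. -/
def pentagramP (k : ℤ) : Set (ℤ × ℤ × ℤ) := pentagramQ k ∪ pentagramQ (k + 1)

/-- The covering relation: `(r',s',t')` covers `(r,s,t)` iff `t' = t + 1` and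
`|r'-r| + |s'-s| = 1`. -/
def pentagramCovers (x y : ℤ × ℤ × ℤ) : Prop :=
  y.2.2 = x.2.2 + 1 ∧ |y.1 - x.1| + |y.2.1 - x.2.1| = 1

/-- The partial order on `P_k`: the reflexive-transitive closure of the covering
relation within `P_k`. -/
def pentagramLe (k : ℤ) : (ℤ × ℤ × ℤ) → (ℤ × ℤ × ℤ) → Prop :=
  Relation.ReflTransGen
    (fun x y => x ∈ pentagramP k ∧ y ∈ pentagramP k ∧ pentagramCovers x y)

/-- An order ideal of `P_k`: a downward-closed subset of `P_k`. -/
def IsPentagramOrderIdeal (k : ℤ) (I : Set (ℤ × ℤ × ℤ)) : Prop :=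
  I ⊆ pentagramP k ∧ ∀ x y, y ∈ I → pentagramLe k x y → x ∈ I

/-- `P_k` realized as a `Finset` (it is contained in the displayed finite box). -/
def pentagramPFinset (k : ℤ) : Finset (ℤ × ℤ × ℤ) :=
  ((Finset.Icc (-(k-1)) (k-1)) ×ˢ (Finset.Icc (-(k-1)) (k-1)) ×ˢ
    (Finset.Icc (-(k-1)) (k-1))).filter (fun p => p ∈ pentagramP k)

/-- The F-polynomial `F_{j,k} = Σ_{order ideals I of P_k} Π_{(r,s,t) ∈ I} y_{3r+s+j}`,
as an element of `ℤ[y_i : i ∈ ℤ] = MvPolynomial ℤ ℤ`. -/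
def pentagramF (j k : ℤ) : MvPolynomial ℤ ℤ :=
  ∑ I ∈ (pentagramPFinset k).powerset.filter
      (fun I : Finset (ℤ × ℤ × ℤ) => IsPentagramOrderIdeal k (↑I : Set (ℤ × ℤ × ℤ))),
    ∏ p ∈ I, X (3 * p.1 + p.2.1 + j)

/-- The ring endomorphism of `ℤ[y_i : i ∈ ℤ]` sending `y_i ↦ -1` for `i ∈ S`
and fixing the other variables; `substNeg S F` is `F|_S`. -/
def substNeg (S : Set ℤ) : MvPolynomial ℤ ℤ →+* MvPolynomial ℤ ℤ :=
  (MvPolynomial.aeval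
    (fun i : ℤ => if i ∈ S then (-1 : MvPolynomial ℤ ℤ) else X i)).toRingHom

/-- The arithmetic progression `[a,b]_d = {a, a+d, a+2d, …, b}` (as a subset of `ℤ`). -/
def AP (a b d : ℤ) : Set ℤ := {x | a ≤ x ∧ x ≤ b ∧ d ∣ (x - a)}

/-- The ring homomorphism `R_n : ℤ[y_i : i ∈ ℤ] → ℤ[z_0, …, z_{2n-1}]` sending
`y_i` to `z_{i mod 2n}` (the variables `z_a` being indexed by `ZMod (2n)`). -/
def pentagramR (n : ℕ) : MvPolynomial ℤ ℤ →+* MvPolynomial (ZMod (2 * n)) ℤ :=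
  (MvPolynomial.aeval
    (fun i : ℤ => (X (i : ZMod (2 * n)) : MvPolynomial (ZMod (2 * n)) ℤ))).toRingHom

/-- The ring endomorphism `φ` of `ℤ[z_0, …, z_{2n-1}]` sending `z_a ↦ -1` for each
even `a` with `2 ≤ a ≤ 2n-2`, and fixing the other variables. -/
def pentagramPhi (n : ℕ) : MvPolynomial (ZMod (2 * n)) ℤ →+* MvPolynomial (ZMod (2 * n)) ℤ :=
  (MvPolynomial.aeval
    (fun a : ZMod (2 * n) =>
      if 2 ≤ a.val ∧ a.val ≤ 2 * n - 2 ∧ 2 ∣ a.val then (-1 : MvPolynomial (ZMod (2 * n)) ℤ)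
      else X a)).toRingHom

/-!
The elements of `Q_k` form columns over the interior corners of a `k × k` grid, those of `Q_{k+1}`
over its cells, and all coverings of `P_k` join the two. The depths at which an order ideal meets
the columns of `Q_k` are the corner sums of a `k × k` alternating sign matrix. The ideals with
given depths form a Boolean interval whose free elements lie over the entries `1` of the matrix, so
they contribute a monomial times `∏ (1 + w)` over the weights `w` of the free elements.

Write `j = n + 2m`. For `k = n + 1` the homomorphism `φ ∘ R_n` gives the elements over the cell
`(x, y)` the weight `z_0` if `n ∣ 2x + y + m`, and `-1` otherwise. Hence only the alternating sign
matrices whose entries `1` all satisfy this congruence contribute. In each row and column the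
congruence has a single solution, except for one row and one column, where its solutions are the
two outermost positions. Exactly one matrix is supported there: it has one entry `-1`, where the
exceptional row and column meet, and `n + 2` entries `1`.
-/

lemma sum_Icc_prod {α R : Type*} [DecidableEq α] [CommSemiring R] {L U : Finset α} (h : L ⊆ U)
    (g : α → R) :
    ∑ B ∈ Finset.Icc L U, ∏ p ∈ B, g p = (∏ p ∈ L, g p) * ∏ p ∈ U \ L, (1 + g p) := by
  have hdisj : ∀ B ∈ (U \ L).powerset, Disjoint L B := fun B hB =>
    Finset.disjoint_sdiff.mono_right (Finset.mem_powerset.1 hB)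
  rw [Finset.Icc_eq_image_powerset h, Finset.sum_image, Finset.prod_one_add, Finset.mul_sum]
  · exact Finset.sum_congr rfl fun B hB => Finset.prod_union (hdisj B hB)
  · intro B hB B' hB' hBB'
    have hBB' : L ∪ B = L ∪ B' := hBB'
    rw [← Finset.union_sdiff_cancel_left (hdisj B hB), hBB',
      Finset.union_sdiff_cancel_left (hdisj B' hB')]

section BipartiteIdeals

variable {α : Type*} [DecidableEq α] {P I J : Finset α} {Q : Set α} {cov : α → α → Prop}

/-- The order ideals of the poset on `P` generated by the covering relation `cov`, where `cov p q`
means that `q` covers `p`. It suffices to require closure under single coverings. -/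
def IsCoverIdeal (P : Finset α) (cov : α → α → Prop) (I : Finset α) : Prop :=
  I ⊆ P ∧ ∀ p ∈ P, ∀ q ∈ I, cov p q → p ∈ I

/-- The least order ideal with the same trace on `Q` as the ideal `J`, when all coverings join `Q`
to its complement. -/
def minIdeal (Q : Set α) (cov : α → α → Prop) (J : Finset α) : Finset α :=
  J.filter fun p => p ∈ Q ∨ ∃ q ∈ J, cov p q

/-- The greatest order ideal with the same trace on `Q` as the ideal `J`, when all coverings join
`Q` to its complement. -/
def maxIdeal (P : Finset α) (Q : Set α) (cov : α → α → Prop) (J : Finset α) : Finset α :=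
  P.filter fun p => (p ∈ Q → p ∈ J) ∧ (p ∉ Q → ∀ q ∈ P, cov q p → q ∈ J)

/-- The elements on which two order ideals with the same trace on `Q` as `J` may differ. -/
def freeSet (P : Finset α) (Q : Set α) (cov : α → α → Prop) (J : Finset α) : Finset α :=
  maxIdeal P Q cov J \ minIdeal Q cov J

lemma notMem_freeSet_of_mem {p : α} (hp : p ∈ Q) : p ∉ freeSet P Q cov J := by
  intro h
  obtain ⟨hmax, hmin⟩ := Finset.mem_sdiff.1 h
  exact hmin (Finset.mem_filter.2 ⟨(Finset.mem_filter.1 hmax).2.1 hp, .inl hp⟩)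

lemma mem_Icc_minIdeal_maxIdeal_iff (hbip : ∀ p ∈ P, ∀ q ∈ P, cov p q → (p ∈ Q ↔ q ∉ Q))
    (hJ : IsCoverIdeal P cov J) :
    I ∈ Finset.Icc (minIdeal Q cov J) (maxIdeal P Q cov J) ↔
      IsCoverIdeal P cov I ∧ I.filter (· ∈ Q) = J.filter (· ∈ Q) := by
  simp only [Finset.mem_Icc, Finset.subset_iff, Finset.ext_iff,
    minIdeal, maxIdeal, Finset.mem_filter, and_congr_left_iff]
  constructor
  · rintro ⟨hmin, hmax⟩
    refine ⟨⟨fun p hp => (hmax hp).1, fun p hp q hq hpq => ?_⟩, fun p hpQ =>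
      ⟨fun hp => (hmax hp).2.1 hpQ, fun hp => hmin ⟨hp, .inl hpQ⟩⟩⟩
    obtain ⟨hqP, hqJ, hlow⟩ := hmax hq
    by_cases hqQ : q ∈ Q
    · exact hmin ⟨hJ.2 p hp q (hqJ hqQ) hpq, .inr ⟨q, hqJ hqQ, hpq⟩⟩
    · exact hmin ⟨hlow hqQ p hp hpq, .inl ((hbip p hp q hqP hpq).2 hqQ)⟩
  · rintro ⟨hI, htrace⟩
    refine ⟨fun p => ?_, fun p hp => ⟨hI.1 hp, fun hpQ => (htrace p hpQ).1 hp,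
      fun hpQ q hq hqp => ?_⟩⟩
    · rintro ⟨hp, hpQ | ⟨q, hq, hpq⟩⟩
      · exact (htrace p hpQ).2 hp
      · by_cases hpQ : p ∈ Q
        · exact (htrace p hpQ).2 hp
        · have hqQ : q ∈ Q := not_not.1 (mt (hbip p (hJ.1 hp) q (hJ.1 hq) hpq).2 hpQ)
          exact hI.2 p (hJ.1 hp) q ((htrace q hqQ).2 hq) hpq
    · exact (htrace q ((hbip q hq p (hI.1 hp) hqp).2 hpQ)).1 (hI.2 q hq p hp hqp)

lemma sum_prod_of_trace_eq {R : Type*} [CommSemiring R]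
    (hbip : ∀ p ∈ P, ∀ q ∈ P, cov p q → (p ∈ Q ↔ q ∉ Q)) (hJ : IsCoverIdeal P cov J)
    (g : α → R) :
    ∑ I ∈ P.powerset.filter (fun I => IsCoverIdeal P cov I ∧ I.filter (· ∈ Q) = J.filter (· ∈ Q)),
        ∏ p ∈ I, g p =
      (∏ p ∈ minIdeal Q cov J, g p) * ∏ p ∈ freeSet P Q cov J, (1 + g p) := by
  have hmem := (mem_Icc_minIdeal_maxIdeal_iff hbip hJ).2 ⟨hJ, rfl⟩
  rw [freeSet, ← sum_Icc_prod ((Finset.mem_Icc.1 hmem).1.trans (Finset.mem_Icc.1 hmem).2)]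
  refine Finset.sum_congr (Finset.ext fun I => ?_) fun _ _ => rfl
  rw [mem_Icc_minIdeal_maxIdeal_iff hbip hJ, Finset.mem_filter, Finset.mem_powerset,
    and_iff_right_of_imp fun h => h.1.1]

-- A trace class whose ideals have a free element of weight `-1` contributes `0`.
lemma sum_prod_of_forall_trace_eq {R : Type*} [CommRing R]
    (hbip : ∀ p ∈ P, ∀ q ∈ P, cov p q → (p ∈ Q ↔ q ∉ Q)) (hJ : IsCoverIdeal P cov J)
    {g : α → R} (huniq : ∀ I, IsCoverIdeal P cov I → (∀ p ∈ freeSet P Q cov I, g p ≠ -1) →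
      I.filter (· ∈ Q) = J.filter (· ∈ Q)) :
    ∑ I ∈ P.powerset.filter (IsCoverIdeal P cov), ∏ p ∈ I, g p =
      (∏ p ∈ minIdeal Q cov J, g p) * ∏ p ∈ freeSet P Q cov J, (1 + g p) := by
  have hJmem : J ∈ P.powerset.filter (IsCoverIdeal P cov) :=
    Finset.mem_filter.2 ⟨Finset.mem_powerset.2 hJ.1, hJ⟩
  rw [← sum_prod_of_trace_eq hbip hJ, ← Finset.filter_filter,
    ← Finset.sum_fiberwise_of_maps_to
      (t := (P.powerset.filter (IsCoverIdeal P cov)).image fun I => I.filter (· ∈ Q))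
      fun I hI => Finset.mem_image_of_mem (fun I => I.filter (· ∈ Q)) hI]
  refine Finset.sum_eq_single_of_mem _
    (Finset.mem_image_of_mem (fun I => I.filter (· ∈ Q)) hJmem) fun A hA hne => ?_
  obtain ⟨I, hI, rfl⟩ := Finset.mem_image.1 hA
  have hI : IsCoverIdeal P cov I := (Finset.mem_filter.1 hI).2
  obtain ⟨p, hp, hgp⟩ : ∃ p ∈ freeSet P Q cov I, g p = -1 := by
    by_contra! hcon
    exact hne (huniq I hI hcon)
  rw [Finset.filter_filter, sum_prod_of_trace_eq hbip hI,
    Finset.prod_eq_zero hp (by rw [hgp, add_neg_cancel]), mul_zero]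

end BipartiteIdeals

section CornerSums

variable {N : ℕ} {C C' : ℕ → ℕ → ℕ} {x y : ℕ}

/-- Corner-sum matrices of the `N × N` alternating sign matrices: `C x y` is the sum of the entries
in the first `x` rows and the first `y` columns. Values at arguments above `N` are irrelevant. -/
structure IsCornerSum (N : ℕ) (C : ℕ → ℕ → ℕ) : Prop where
  zero_left : ∀ y ≤ N, C 0 y = 0
  zero_right : ∀ x ≤ N, C x 0 = 0
  last_left : ∀ y ≤ N, C N y = y
  last_right : ∀ x ≤ N, C x N = x
  step_left : ∀ x < N, ∀ y ≤ N, C (x + 1) y = C x y ∨ C (x + 1) y = C x y + 1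
  step_right : ∀ x ≤ N, ∀ y < N, C x (y + 1) = C x y ∨ C x (y + 1) = C x y + 1

/-- The entry in row `x` and column `y`, both counted from `0`, of the alternating sign matrix with
corner sums `C`. -/
def cornerEntry (C : ℕ → ℕ → ℕ) (x y : ℕ) : ℤ :=
  C (x + 1) (y + 1) - C (x + 1) y - C x (y + 1) + C x y

/-- The positions of the entries `1` of the alternating sign matrix with corner sums `C`. -/
def onePositions (N : ℕ) (C : ℕ → ℕ → ℕ) : Finset (ℕ × ℕ) :=
  (Finset.range N ×ˢ Finset.range N).filter fun p => cornerEntry C p.1 p.2 = 1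

lemma mem_onePositions :
    (x, y) ∈ onePositions N C ↔ x < N ∧ y < N ∧ cornerEntry C x y = 1 := by
  rw [onePositions, Finset.mem_filter, Finset.mem_product, Finset.mem_range, Finset.mem_range,
    and_assoc]

lemma IsCornerSum.swap (hC : IsCornerSum N C) : IsCornerSum N (Function.swap C) :=
  ⟨hC.zero_right, hC.zero_left, hC.last_right, hC.last_left,
    fun x hx y hy => hC.step_right y hy x hx, fun x hx y hy => hC.step_left y hy x hx⟩

lemma IsCornerSum.le_left (hC : IsCornerSum N C) (hx : x ≤ N) (hy : y ≤ N) : C x y ≤ x := by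
  induction x with
  | zero => rw [hC.zero_left y hy]
  | succ x ih => have := ih (by omega); have := hC.step_left x hx y hy; omega

lemma IsCornerSum.le_right (hC : IsCornerSum N C) (hx : x ≤ N) (hy : y ≤ N) : C x y ≤ y :=
  hC.swap.le_left hy hx

lemma IsCornerSum.add_le (hC : IsCornerSum N C) (hx : x ≤ N) (hy : y ≤ N) :
    x + y ≤ C x y + N := by
  induction hx using Nat.decreasingInduction with
  | self => rw [hC.last_left y hy, add_comm]
  | of_succ x hx ih => have := hC.step_left x hx y hy; omega

lemma IsCornerSum.cornerEntry_eq_one_iff (hC : IsCornerSum N C) (hx : x < N) (hy : y < N) :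
    cornerEntry C x y = 1 ↔
      C (x + 1) y = C x y ∧ C x (y + 1) = C x y ∧ C (x + 1) (y + 1) = C x y + 1 := by
  have := hC.step_left x hx y hy.le
  have := hC.step_right x hx.le y hy
  have := hC.step_left x hx (y + 1) hy
  have := hC.step_right (x + 1) hx y hy
  unfold cornerEntry
  omega

lemma iff_lt_of_unique_switch {p : ℕ → Prop} {s : ℕ} (hzero : ¬p 0) (hlast : p N)
    (hswitch : ∀ y < N, ¬p y → p (y + 1) → y = s) (hy : y ≤ N) : p y ↔ s < y := by
  refine ⟨fun hp => ?_, fun hlt => ?_⟩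
  · contrapose! hp
    induction y with
    | zero => exact hzero
    | succ y ih => exact fun h => absurd (hswitch y hy (ih (by omega) (by omega)) h) (by omega)
  · induction hy using Nat.decreasingInduction with
    | self => exact hlast
    | of_succ y hy ih =>
      by_contra hp
      exact absurd (hswitch y hy hp (ih (by omega))) (by omega)

lemma IsCornerSum.succ_left_eq (hC : IsCornerSum N C) {s : ℕ} (hx : x < N)
    (hrow : ∀ y < N, cornerEntry C x y = 1 → y = s) (hy : y ≤ N) :
    C (x + 1) y = C x y + if s < y then 1 else 0 := by
  have hiff : C (x + 1) y = C x y + 1 ↔ s < y :=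
    iff_lt_of_unique_switch (p := fun y => C (x + 1) y = C x y + 1)
      (by rw [hC.zero_right _ hx, hC.zero_right _ hx.le]; omega)
      (by rw [hC.last_right _ hx, hC.last_right _ hx.le])
      (fun y hy h0 h1 => hrow y hy ((hC.cornerEntry_eq_one_iff hx hy).2 (by
        have := hC.step_left x hx y hy.le
        have := hC.step_right x hx.le y hy
        have := hC.step_right (x + 1) hx y hy
        omega))) hy
  have := hC.step_left x hx y hy
  split_ifs <;> omega

-- A row with at most one position for its entries `1` is determined. The rows before `x₀` are
-- reached from the corner sums `C 0 y`, those after `x₀` from `C N y`.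
lemma IsCornerSum.eq_of_unique_in_rows (hC : IsCornerSum N C) (hC' : IsCornerSum N C') {x₀ : ℕ}
    (hrow : ∀ x < N, x ≠ x₀ →
      ∃ s, ∀ y < N, cornerEntry C x y = 1 ∨ cornerEntry C' x y = 1 → y = s)
    (hx : x ≤ N) (hy : y ≤ N) : C x y = C' x y := by
  have hstep : ∀ x < N, x ≠ x₀ → (C (x + 1) y = C' (x + 1) y ↔ C x y = C' x y) := by
    intro x hx hne
    obtain ⟨s, hs⟩ := hrow x hx hne
    rw [hC.succ_left_eq hx (fun y hy h => hs y hy (.inl h)) hy,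
      hC'.succ_left_eq hx (fun y hy h => hs y hy (.inr h)) hy, Nat.add_right_cancel_iff]
  rcases Nat.lt_or_ge x₀ x with hlt | hge
  · induction hx using Nat.decreasingInduction with
    | self => rw [hC.last_left y hy, hC'.last_left y hy]
    | of_succ x hx ih => exact (hstep x hx (by omega)).1 (ih (by omega))
  · induction x with
    | zero => rw [hC.zero_left y hy, hC'.zero_left y hy]
    | succ x ih => exact (hstep x hx (by omega)).2 (ih (by omega) (by omega))

end CornerSums

section AlternatingSignMatrices

variable {N : ℕ} {A : ℕ → ℕ → ℤ} {x y : ℕ}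

/-- The condition on the rows of an `N × N` alternating sign matrix, in terms of partial sums. -/
structure HasAlternatingRows (N : ℕ) (A : ℕ → ℕ → ℤ) : Prop where
  partial_sum : ∀ x < N, ∀ y ≤ N, ∑ j ∈ Finset.range y, A x j = 0 ∨ ∑ j ∈ Finset.range y, A x j = 1
  sum_eq_one : ∀ x < N, ∑ j ∈ Finset.range N, A x j = 1

/-- The sum of the entries of a matrix in the first `x` rows and the first `y` columns. -/
def cornerSum (A : ℕ → ℕ → ℤ) (x y : ℕ) : ℤ :=
  ∑ i ∈ Finset.range x, ∑ j ∈ Finset.range y, A i j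

lemma cornerSum_swap (A : ℕ → ℕ → ℤ) (x y : ℕ) :
    cornerSum (Function.swap A) y x = cornerSum A x y :=
  Finset.sum_comm

lemma cornerSum_succ_left (A : ℕ → ℕ → ℤ) (x y : ℕ) :
    cornerSum A (x + 1) y = cornerSum A x y + ∑ j ∈ Finset.range y, A x j :=
  Finset.sum_range_succ _ _

lemma HasAlternatingRows.cornerSum_nonneg (hA : HasAlternatingRows N A) (hx : x ≤ N)
    (hy : y ≤ N) : 0 ≤ cornerSum A x y :=
  Finset.sum_nonneg fun i hi => by
    have := hA.partial_sum i ((Finset.mem_range.1 hi).trans_le hx) y hy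
    omega

lemma HasAlternatingRows.cornerSum_last (hA : HasAlternatingRows N A) (hx : x ≤ N) :
    cornerSum A x N = x := by
  rw [cornerSum, Finset.sum_congr rfl fun i hi =>
    hA.sum_eq_one i ((Finset.mem_range.1 hi).trans_le hx)]
  simp only [Finset.sum_const, Finset.card_range, nsmul_eq_mul, mul_one]

lemma cornerSum_sub_sub_add (A : ℕ → ℕ → ℤ) (x y : ℕ) :
    cornerSum A (x + 1) (y + 1) - cornerSum A (x + 1) y - cornerSum A x (y + 1) + cornerSum A x y =
      A x y := by
  rw [cornerSum_succ_left, cornerSum_succ_left, Finset.sum_range_succ]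
  ring

lemma exists_isCornerSum (hrows : HasAlternatingRows N A)
    (hcols : HasAlternatingRows N (Function.swap A)) :
    ∃ C, IsCornerSum N C ∧ ∀ x < N, ∀ y < N, cornerEntry C x y = A x y := by
  have hcast : ∀ x ≤ N, ∀ y ≤ N, ((cornerSum A x y).toNat : ℤ) = cornerSum A x y :=
    fun x hx y hy => Int.toNat_of_nonneg (hrows.cornerSum_nonneg hx hy)
  refine ⟨fun x y => (cornerSum A x y).toNat, ⟨?_, ?_, ?_, ?_, ?_, ?_⟩, ?_⟩
  · exact fun y _ => rfl
  · intro x _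
    rw [← cornerSum_swap]
    rfl
  · intro y hy
    rw [← cornerSum_swap, hcols.cornerSum_last hy, Int.toNat_natCast]
  · intro x hx
    rw [hrows.cornerSum_last hx, Int.toNat_natCast]
  · intro x hx y hy
    have := hrows.partial_sum x hx y hy
    have := cornerSum_succ_left A x y
    have := hcast x hx.le y hy
    have := hcast (x + 1) hx y hy
    omega
  · intro x hx y hy
    have := hcols.partial_sum y hy x hx
    have := cornerSum_succ_left (Function.swap A) y x
    simp only [cornerSum_swap] at this
    have := hcast x hx y hy.le
    have := hcast x hx (y + 1) hy
    omega
  · intro x hx y hy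
    simp only [cornerEntry, hcast _ hx _ hy, hcast _ hx _ hy.le, hcast _ hx.le _ hy,
      hcast _ hx.le _ hy.le, cornerSum_sub_sub_add]

end AlternatingSignMatrices

section Patterns

variable {n : ℕ} {Z : ℕ → ℕ → Prop} {x₀ y₀ : ℕ}

/-- The condition on the rows of a set `Z` of positions in `[0, n]²` which makes `Z` the support of
the entries `1` of an alternating sign matrix whose only entry `-1` is at `(x₀, y₀)`: row `x₀` meets
`Z` in the two outermost positions, every other row in a single one. -/
structure IsRowPattern (n : ℕ) (Z : ℕ → ℕ → Prop) (x₀ y₀ : ℕ) : Prop where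
  pos : 0 < y₀
  lt : y₀ < n
  unique : ∀ x ≤ n, x ≠ x₀ → ∃ s ≤ n, ∀ y ≤ n, Z x y ↔ y = s
  double : ∀ y ≤ n, Z x₀ y ↔ y = 0 ∨ y = n

/-- The matrix with entries `1` on `Z`, with `1` subtracted at `(x₀, y₀)`. -/
def patternMatrix (Z : ℕ → ℕ → Prop) (x₀ y₀ x y : ℕ) : ℤ :=
  (if Z x y then 1 else 0) - if x = x₀ ∧ y = y₀ then 1 else 0

lemma swap_patternMatrix (Z : ℕ → ℕ → Prop) (x₀ y₀ : ℕ) :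
    Function.swap (patternMatrix Z x₀ y₀) = patternMatrix (Function.swap Z) y₀ x₀ := by
  funext y x
  simp only [Function.swap, patternMatrix, and_comm]

lemma IsRowPattern.patternMatrix_eq_one_iff (h : IsRowPattern n Z x₀ y₀) {x y : ℕ} :
    patternMatrix Z x₀ y₀ x y = 1 ↔ Z x y := by
  have hZ : ¬Z x₀ y₀ := fun hZ => by
    have := (h.double y₀ h.lt.le).1 hZ
    have := h.pos
    have := h.lt
    omega
  unfold patternMatrix
  by_cases hxy : x = x₀ ∧ y = y₀
  · obtain ⟨rfl, rfl⟩ := hxy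
    simp [hZ]
  · simp [hxy]

lemma IsRowPattern.sum_range_patternMatrix_of_ne (h : IsRowPattern n Z x₀ y₀) {x : ℕ} (hx : x ≤ n)
    (hne : x ≠ x₀) :
    ∃ s ≤ n, ∀ y ≤ n + 1,
      ∑ j ∈ Finset.range y, patternMatrix Z x₀ y₀ x j = if s < y then 1 else 0 := by
  obtain ⟨s, hs, hZ⟩ := h.unique x hx hne
  refine ⟨s, hs, fun y hy => ?_⟩
  have hentry : ∀ j ∈ Finset.range y, patternMatrix Z x₀ y₀ x j = if j = s then 1 else 0 := by
    intro j hj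
    rw [patternMatrix, if_neg (not_and_of_not_left _ hne), sub_zero]
    exact if_congr (hZ j (by rw [Finset.mem_range] at hj; omega)) rfl rfl
  rw [Finset.sum_congr rfl hentry, Finset.sum_ite_eq']
  exact if_congr Finset.mem_range rfl rfl

lemma IsRowPattern.sum_range_patternMatrix_self (h : IsRowPattern n Z x₀ y₀) {y : ℕ}
    (hy : y ≤ n + 1) :
    ∑ j ∈ Finset.range y, patternMatrix Z x₀ y₀ x₀ j =
      (if 0 < y then 1 else 0) + (if n < y then 1 else 0) - if y₀ < y then 1 else 0 := by
  have hpos : 0 < n := h.pos.trans h.lt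
  have hentry : ∀ j ∈ Finset.range y, patternMatrix Z x₀ y₀ x₀ j =
      (if j = 0 then 1 else 0) + (if j = n then 1 else 0) - if j = y₀ then 1 else 0 := by
    intro j hj
    simp only [patternMatrix, h.double j (by rw [Finset.mem_range] at hj; omega), true_and]
    split_ifs <;> omega
  simp only [Finset.sum_congr rfl hentry, Finset.sum_sub_distrib, Finset.sum_add_distrib,
    Finset.sum_ite_eq', Finset.mem_range]

lemma IsRowPattern.hasAlternatingRows (h : IsRowPattern n Z x₀ y₀) :
    HasAlternatingRows (n + 1) (patternMatrix Z x₀ y₀) := by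
  have hpos := h.pos
  have hlt := h.lt
  constructor
  · intro x hx y hy
    rcases eq_or_ne x x₀ with rfl | hne
    · rw [h.sum_range_patternMatrix_self hy]
      split_ifs <;> omega
    · obtain ⟨s, -, hsum⟩ := h.sum_range_patternMatrix_of_ne (Nat.lt_succ_iff.1 hx) hne
      rw [hsum y hy]
      split_ifs <;> simp
  · intro x hx
    rcases eq_or_ne x x₀ with rfl | hne
    · rw [h.sum_range_patternMatrix_self le_rfl]
      split_ifs <;> omega
    · obtain ⟨s, hs, hsum⟩ := h.sum_range_patternMatrix_of_ne (Nat.lt_succ_iff.1 hx) hne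
      rw [hsum _ le_rfl, if_pos (Nat.lt_succ_iff.2 hs)]

lemma card_filter_eq_of_isRowPattern (hrow : IsRowPattern n Z x₀ y₀)
    (hcol : IsRowPattern n (Function.swap Z) y₀ x₀) :
    ((Finset.range (n + 1) ×ˢ Finset.range (n + 1)).filter fun p => Z p.1 p.2).card = n + 2 := by
  have hmem : (x₀, y₀) ∈ Finset.range (n + 1) ×ˢ Finset.range (n + 1) :=
    Finset.mk_mem_product (Finset.mem_range.2 (hcol.lt.trans n.lt_succ_self))
      (Finset.mem_range.2 (hrow.lt.trans n.lt_succ_self))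
  have hsum := hrow.hasAlternatingRows.cornerSum_last le_rfl
  rw [cornerSum, ← Finset.sum_product'] at hsum
  simp only [patternMatrix, ← Prod.mk_inj, Finset.sum_sub_distrib, Prod.mk.eta,
    Finset.sum_ite_eq', hmem, if_true, Finset.sum_boole] at hsum
  push_cast at hsum
  omega

lemma exists_isCornerSum_of_isRowPattern (hrow : IsRowPattern n Z x₀ y₀)
    (hcol : IsRowPattern n (Function.swap Z) y₀ x₀) :
    ∃ C, IsCornerSum (n + 1) C ∧ onePositions (n + 1) C =
      (Finset.range (n + 1) ×ˢ Finset.range (n + 1)).filter fun p => Z p.1 p.2 := by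
  obtain ⟨C, hC, hentry⟩ := exists_isCornerSum hrow.hasAlternatingRows
    (swap_patternMatrix Z x₀ y₀ ▸ hcol.hasAlternatingRows)
  refine ⟨C, hC, Finset.filter_congr fun p hp => ?_⟩
  obtain ⟨hx, hy⟩ := Finset.mem_product.1 hp
  rw [hentry _ (Finset.mem_range.1 hx) _ (Finset.mem_range.1 hy), hrow.patternMatrix_eq_one_iff]

lemma IsRowPattern.cornerSum_unique (h : IsRowPattern n Z x₀ y₀) {C C' : ℕ → ℕ → ℕ}
    (hC : IsCornerSum (n + 1) C) (hC' : IsCornerSum (n + 1) C')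
    (hone : ∀ p ∈ onePositions (n + 1) C, Z p.1 p.2)
    (hone' : ∀ p ∈ onePositions (n + 1) C', Z p.1 p.2) {x y : ℕ} (hx : x ≤ n + 1)
    (hy : y ≤ n + 1) : C x y = C' x y := by
  refine hC.eq_of_unique_in_rows hC' (x₀ := x₀) (fun x hx hne => ?_) hx hy
  obtain ⟨s, -, hs⟩ := h.unique x (Nat.le_of_lt_succ hx) hne
  refine ⟨s, fun y hy hxy => (hs y (Nat.le_of_lt_succ hy)).1 ?_⟩
  rcases hxy with hxy | hxy
  · exact hone _ (mem_onePositions.2 ⟨hx, hy, hxy⟩)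
  · exact hone' _ (mem_onePositions.2 ⟨hx, hy, hxy⟩)

end Patterns

section Congruences

variable {n : ℕ} {a b m c : ℤ}

lemma eq_or_eq_of_dvd_sub {y s : ℕ} (hy : y ≤ n) (hs : s < n) (h : (n : ℤ) ∣ y - s) :
    y = s ∨ s = 0 ∧ y = n := by
  rcases hy.lt_or_eq with hlt | rfl
  · have := Int.eq_zero_of_abs_lt_dvd h (by rw [abs_lt]; omega)
    omega
  · have hdvd : y ∣ s := Int.natCast_dvd_natCast.1 ((dvd_sub_right dvd_rfl).1 h)
    exact .inr ⟨Nat.eq_zero_of_dvd_of_lt hdvd hs, rfl⟩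

lemma exists_unique_root_of_not_dvd (hn : 0 < n) (hb : IsCoprime b n) (hc : ¬(n : ℤ) ∣ c) :
    ∃ s, 0 < s ∧ s < n ∧ ∀ y ≤ n, (n : ℤ) ∣ b * y + c ↔ y = s := by
  obtain ⟨u, v, huv⟩ := hb
  obtain ⟨s, hs, hsc⟩ := Int.existsUnique_equiv_nat (-(u * c)) (Int.natCast_pos.2 hn)
  have hdvd : ∀ y : ℤ, (n : ℤ) ∣ b * y + c ↔ (n : ℤ) ∣ y - s := by
    obtain ⟨t, ht⟩ := hsc.dvd
    refine fun y => ⟨fun ⟨q, hq⟩ => ⟨u * q + v * y + t, ?_⟩,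
      fun ⟨q, hq⟩ => ⟨b * q + v * c - b * t, ?_⟩⟩
    · linear_combination u * hq - y * huv + ht
    · linear_combination b * hq - c * huv - b * ht
  have hs0 : 0 < s := by
    rcases Nat.eq_zero_or_pos s with rfl | h
    · exact absurd (by simpa using (hdvd 0).2 (by simp)) hc
    · exact h
  refine ⟨s, hs0, Int.ofNat_lt.1 hs, fun y hy => ?_⟩
  rw [hdvd]
  refine ⟨fun h => ?_, fun h => by simp [h]⟩
  have := eq_or_eq_of_dvd_sub hy (Int.ofNat_lt.1 hs) h
  omega

lemma isRowPattern_of_unique_root (hn : 0 < n) (hb : IsCoprime b n) {x₀ y₀ : ℕ} (hpos : 0 < y₀)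
    (hlt : y₀ < n) (hx₀ : ∀ x ≤ n, (n : ℤ) ∣ a * x + m ↔ x = x₀) (hx₀n : x₀ ≤ n) :
    IsRowPattern n (fun x y => (n : ℤ) ∣ a * x + b * y + m) x₀ y₀ := by
  refine ⟨hpos, hlt, fun x hx hne => ?_, fun y hy => ?_⟩
  · obtain ⟨s, -, hs, hroot⟩ := exists_unique_root_of_not_dvd hn hb (mt (hx₀ x hx).1 hne)
    refine ⟨s, hs.le, fun y hy => ?_⟩
    rw [← hroot y hy, add_left_comm, add_assoc]
  · rw [add_right_comm, dvd_add_right ((hx₀ x₀ hx₀n).2 rfl)]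
    constructor
    · intro h
      have hdvd : (n : ℤ) ∣ y := hb.symm.dvd_of_dvd_mul_left h
      have := eq_or_eq_of_dvd_sub hy hn (by simpa using hdvd)
      omega
    · rintro (rfl | rfl)
      · simp
      · exact dvd_mul_left _ _

lemma exists_isRowPattern_of_not_dvd (hn : 0 < n) (ha : IsCoprime a n) (hb : IsCoprime b n)
    (hm : ¬(n : ℤ) ∣ m) :
    ∃ x₀ y₀, IsRowPattern n (fun x y => (n : ℤ) ∣ a * x + b * y + m) x₀ y₀ ∧
      IsRowPattern n (fun y x => (n : ℤ) ∣ a * x + b * y + m) y₀ x₀ := by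
  obtain ⟨x₀, hx₀, hx₀n, hx⟩ := exists_unique_root_of_not_dvd hn ha hm
  obtain ⟨y₀, hy₀, hy₀n, hy⟩ := exists_unique_root_of_not_dvd hn hb hm
  refine ⟨x₀, y₀, isRowPattern_of_unique_root hn hb hy₀ hy₀n hx hx₀n.le, ?_⟩
  simp only [add_comm (a * _) (b * _)]
  exact isRowPattern_of_unique_root hn ha hx₀ hx₀n hy hy₀n.le

end Congruences

section Coordinates

variable {k : ℤ} {x y c d : ℕ} {p q : ℤ × ℤ × ℤ}

/-- Coordinates on `Q_k`, whose elements are the triples with `x + y - k ≤ c < min x y`: over each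
position `(x, y)` there is a column of elements numbered downwards by `c`. -/
def pentagramPoint (k : ℤ) (x y c : ℕ) : ℤ × ℤ × ℤ :=
  (x + y - k, x - y, 2 * x + 2 * y - k - 2 - 4 * c)

/-- Coordinates on `Q_{k+1}`, shifted so that the columns of `Q_k` adjacent to the one over `(x, y)`
are those over the corners `(x, y)`, `(x + 1, y)`, `(x, y + 1)`, `(x + 1, y + 1)` of a unit cell. -/
def pentagramCell (k : ℤ) (x y d : ℕ) : ℤ × ℤ × ℤ :=
  pentagramPoint (k + 1) (x + 1) (y + 1) d

lemma pentagramPoint_mem_pentagramQ :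
    pentagramPoint k x y c ∈ pentagramQ k ↔ x + y ≤ c + k ∧ c < x ∧ c < y := by
  simp only [pentagramQ, pentagramPoint, Set.mem_ofPred_eq]
  rcases abs_cases ((x : ℤ) + y - k) with hr | hr <;>
  rcases abs_cases ((x : ℤ) - y) with hs | hs <;> omega

lemma exists_eq_pentagramPoint (hp : p ∈ pentagramQ k) : ∃ x y c, p = pentagramPoint k x y c := by
  obtain ⟨r, s, t⟩ := p
  simp only [pentagramQ, Set.mem_ofPred_eq] at hp
  refine ⟨((r + s + k) / 2).toNat, ((r - s + k) / 2).toNat, ((2 * r + k - 2 - t) / 4).toNat, ?_⟩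
  simp only [pentagramPoint, Prod.mk.injEq]
  rcases abs_cases r with hr | hr <;>
  rcases abs_cases s with hs | hs <;> omega

lemma exists_eq_pentagramCell (hp : p ∈ pentagramQ (k + 1)) :
    ∃ x y d, p = pentagramCell k x y d := by
  obtain ⟨x, y, d, rfl⟩ := exists_eq_pentagramPoint hp
  obtain ⟨-, hx, hy⟩ := pentagramPoint_mem_pentagramQ.1 hp
  refine ⟨x - 1, y - 1, d, ?_⟩
  rw [pentagramCell, Nat.sub_add_cancel (by omega), Nat.sub_add_cancel (by omega)]

lemma pentagramPoint_injective {x' y' c' : ℕ}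
    (h : pentagramPoint k x y c = pentagramPoint k x' y' c') : x = x' ∧ y = y' ∧ c = c' := by
  simp only [pentagramPoint, Prod.mk.injEq] at h
  omega

lemma pentagramCell_injective {x' y' d' : ℕ}
    (h : pentagramCell k x y d = pentagramCell k x' y' d') : x = x' ∧ y = y' ∧ d = d' := by
  simpa using pentagramPoint_injective h

lemma mem_pentagramQ_iff_of_mem_pentagramP (hp : p ∈ pentagramP k) :
    p ∈ pentagramQ k ↔ 2 ∣ p.1 + p.2.1 - k := by
  refine ⟨fun h => h.2.1, fun h => hp.resolve_right fun hp' => ?_⟩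
  have := hp'.2.1
  omega

lemma mem_pentagramPFinset : p ∈ pentagramPFinset k ↔ p ∈ pentagramP k := by
  rw [pentagramPFinset, Finset.mem_filter, and_iff_right_iff_imp]
  rw [Finset.mem_product, Finset.mem_product, Finset.mem_Icc, Finset.mem_Icc, Finset.mem_Icc]
  have := abs_nonneg p.1
  have := abs_nonneg p.2.1
  rintro (⟨hrs, -, -, hlow, hupp⟩ | ⟨hrs, -, -, hlow, hupp⟩) <;>
  exact ⟨abs_le.1 (by omega), abs_le.1 (by omega), by omega, by omega⟩

lemma exists_eq_pentagramCell_of_notMem (hp : p ∈ pentagramPFinset k) (hpQ : p ∉ pentagramQ k) :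
    ∃ x y d, p = pentagramCell k x y d :=
  exists_eq_pentagramCell ((mem_pentagramPFinset.1 hp).resolve_left hpQ)

lemma pentagramPoint_mem_pentagramPFinset :
    pentagramPoint k x y c ∈ pentagramPFinset k ↔ x + y ≤ c + k ∧ c < x ∧ c < y := by
  rw [← pentagramPoint_mem_pentagramQ, mem_pentagramPFinset]
  refine ⟨fun h => (mem_pentagramQ_iff_of_mem_pentagramP h).2 ?_, Or.inl⟩
  simp only [pentagramPoint]
  omega

lemma pentagramCell_notMem_pentagramQ : pentagramCell k x y d ∉ pentagramQ k := by
  intro h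
  have := h.2.1
  simp only [pentagramCell, pentagramPoint] at this
  omega

lemma pentagramCell_mem_pentagramPFinset :
    pentagramCell k x y d ∈ pentagramPFinset k ↔ x + y + 1 ≤ d + k ∧ d ≤ x ∧ d ≤ y := by
  rw [mem_pentagramPFinset, pentagramP, Set.mem_union, or_iff_right pentagramCell_notMem_pentagramQ,
    pentagramCell, pentagramPoint_mem_pentagramQ]
  omega

lemma mem_pentagramQ_iff_of_pentagramCovers (hp : p ∈ pentagramPFinset k)
    (hq : q ∈ pentagramPFinset k) (hpq : pentagramCovers p q) :
    p ∈ pentagramQ k ↔ q ∉ pentagramQ k := by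
  rw [mem_pentagramQ_iff_of_mem_pentagramP (mem_pentagramPFinset.1 hp),
    mem_pentagramQ_iff_of_mem_pentagramP (mem_pentagramPFinset.1 hq)]
  have := hpq.2
  rcases abs_cases (q.1 - p.1) with hr | hr <;>
  rcases abs_cases (q.2.1 - p.2.1) with hs | hs <;> omega

lemma pentagramCovers_pentagramCell_right (hp : p ∈ pentagramQ k) :
    pentagramCovers p (pentagramCell k x y d) ↔
      p = pentagramPoint k (x + 1) y d ∨ p = pentagramPoint k x (y + 1) d := by
  obtain ⟨x', y', c, rfl⟩ := exists_eq_pentagramPoint hp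
  simp only [pentagramCovers, pentagramCell, pentagramPoint, Prod.mk.injEq]
  push_cast
  rcases abs_cases ((x : ℤ) + 1 + (y + 1) - (k + 1) - (x' + y' - k)) with hr | hr <;>
  rcases abs_cases ((x : ℤ) + 1 - (y + 1) - (x' - y')) with hs | hs <;> omega

lemma pentagramCovers_pentagramCell_left (hq : q ∈ pentagramQ k) :
    pentagramCovers (pentagramCell k x y d) q ↔
      q = pentagramPoint k (x + 1) (y + 1) d ∨ ∃ c, d = c + 1 ∧ q = pentagramPoint k x y c := by
  obtain ⟨x', y', c', rfl⟩ := exists_eq_pentagramPoint hq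
  have hexists : (∃ c, d = c + 1 ∧ pentagramPoint k x' y' c' = pentagramPoint k x y c) ↔
      d = c' + 1 ∧ x' = x ∧ y' = y := by
    refine ⟨?_, fun ⟨hd, hx, hy⟩ => ⟨c', hd, by rw [hx, hy]⟩⟩
    rintro ⟨c, hd, h⟩
    obtain ⟨hx, hy, rfl⟩ := pentagramPoint_injective h
    exact ⟨hd, hx, hy⟩
  rw [hexists]
  simp only [pentagramCovers, pentagramCell, pentagramPoint, Prod.mk.injEq]
  push_cast
  rcases abs_cases ((x' : ℤ) + y' - k - (x + 1 + (y + 1) - (k + 1))) with hr | hr <;>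
  rcases abs_cases ((x' : ℤ) - y' - (x + 1 - (y + 1))) with hs | hs <;> omega

lemma isPentagramOrderIdeal_iff {I : Finset (ℤ × ℤ × ℤ)} :
    IsPentagramOrderIdeal k I ↔ IsCoverIdeal (pentagramPFinset k) pentagramCovers I := by
  simp only [IsPentagramOrderIdeal, IsCoverIdeal, Finset.subset_iff, Set.subset_def,
    Finset.mem_coe, mem_pentagramPFinset, and_congr_right_iff]
  refine fun hI => ⟨fun h p hp q hq hpq => h p q hq (.single ⟨hp, hI q hq, hpq⟩),
    fun h p q hq hpq => ?_⟩
  induction hpq using Relation.ReflTransGen.head_induction_on with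
  | refl => exact hq
  | head hcov _ ih => exact h _ hcov.1 _ ih hcov.2.2

end Coordinates

section Depths

variable {k : ℤ} {N : ℕ} {I : Finset (ℤ × ℤ × ℤ)} {C : ℕ → ℕ → ℕ} {x y c d : ℕ}

/-- Membership in `I` of the element of depth `c` in the column of `Q_k` over `(x, y)`, with the
convention that it holds from depth `min x y` on, where the column has ended. -/
def IsDeep (k : ℤ) (I : Finset (ℤ × ℤ × ℤ)) (x y c : ℕ) : Prop :=
  x ≤ c ∨ y ≤ c ∨ pentagramPoint k x y c ∈ I

/-- The depth from which the column of `Q_k` over `(x, y)` is contained in the order ideal `I`. -/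
def idealDepth (k : ℤ) (I : Finset (ℤ × ℤ × ℤ)) (x y : ℕ) : ℕ :=
  sInf {c | IsDeep k I x y c}

/-- Each column of `Q_k` meets `I` exactly in its elements of depth at least `C x y`. -/
def HasDepths (k : ℤ) (I : Finset (ℤ × ℤ × ℤ)) (C : ℕ → ℕ → ℕ) : Prop :=
  ∀ x y c, pentagramPoint k x y c ∈ pentagramQ k → (pentagramPoint k x y c ∈ I ↔ C x y ≤ c)

lemma IsCoverIdeal.pentagramCell_mem (hI : IsCoverIdeal (pentagramPFinset k) pentagramCovers I)
    (h : pentagramPoint k (x + 1) (y + 1) c ∈ I) : pentagramCell k x y c ∈ I := by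
  have hbounds := pentagramPoint_mem_pentagramPFinset.1 (hI.1 h)
  exact hI.2 _ (pentagramCell_mem_pentagramPFinset.2 (by omega)) _ h
    ((pentagramCovers_pentagramCell_left (pentagramPoint_mem_pentagramQ.2 hbounds)).2 (.inl rfl))

lemma IsCoverIdeal.pentagramCell_succ_mem
    (hI : IsCoverIdeal (pentagramPFinset k) pentagramCovers I)
    (h : pentagramPoint k x y c ∈ I) : pentagramCell k x y (c + 1) ∈ I := by
  have hbounds := pentagramPoint_mem_pentagramPFinset.1 (hI.1 h)
  exact hI.2 _ (pentagramCell_mem_pentagramPFinset.2 (by omega)) _ h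
    ((pentagramCovers_pentagramCell_left (pentagramPoint_mem_pentagramQ.2 hbounds)).2
      (.inr ⟨c, rfl, rfl⟩))

lemma IsCoverIdeal.isDeep_of_pentagramCell_mem
    (hI : IsCoverIdeal (pentagramPFinset k) pentagramCovers I) (h : pentagramCell k x y d ∈ I) :
    IsDeep k I (x + 1) y d ∧ IsDeep k I x (y + 1) d := by
  have hbounds := pentagramCell_mem_pentagramPFinset.1 (hI.1 h)
  have hmem : ∀ {x' y'}, pentagramPoint k x' y' d ∈ pentagramPFinset k →
      pentagramPoint k x' y' d = pentagramPoint k (x + 1) y d ∨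
        pentagramPoint k x' y' d = pentagramPoint k x (y + 1) d → pentagramPoint k x' y' d ∈ I :=
    fun hP heq => hI.2 _ hP _ h ((pentagramCovers_pentagramCell_right
      (pentagramPoint_mem_pentagramQ.2 (pentagramPoint_mem_pentagramPFinset.1 hP))).2 heq)
  constructor
  · by_cases hy : y ≤ d
    · exact .inr (.inl hy)
    · exact .inr (.inr (hmem (pentagramPoint_mem_pentagramPFinset.2 (by omega)) (.inl rfl)))
  · by_cases hx : x ≤ d
    · exact .inl hx
    · exact .inr (.inr (hmem (pentagramPoint_mem_pentagramPFinset.2 (by omega)) (.inr rfl)))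

lemma IsDeep.of_succ_left (hI : IsCoverIdeal (pentagramPFinset k) pentagramCovers I)
    (h : IsDeep k I (x + 1) y c) : IsDeep k I x y c := by
  rcases h with h | h | h
  · exact .inl (by omega)
  · exact .inr (.inl h)
  · obtain ⟨y, rfl⟩ : ∃ y', y = y' + 1 := Nat.exists_eq_succ_of_ne_zero (by
      have := pentagramPoint_mem_pentagramPFinset.1 (hI.1 h)
      omega)
    exact (hI.isDeep_of_pentagramCell_mem (hI.pentagramCell_mem h)).2

lemma IsDeep.of_succ_right (hI : IsCoverIdeal (pentagramPFinset k) pentagramCovers I)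
    (h : IsDeep k I x (y + 1) c) : IsDeep k I x y c := by
  rcases h with h | h | h
  · exact .inl h
  · exact .inr (.inl (by omega))
  · obtain ⟨x, rfl⟩ : ∃ x', x = x' + 1 := Nat.exists_eq_succ_of_ne_zero (by
      have := pentagramPoint_mem_pentagramPFinset.1 (hI.1 h)
      omega)
    exact (hI.isDeep_of_pentagramCell_mem (hI.pentagramCell_mem h)).1

lemma IsDeep.succ_and_succ (hI : IsCoverIdeal (pentagramPFinset k) pentagramCovers I)
    (h : IsDeep k I x y c) : IsDeep k I (x + 1) y (c + 1) ∧ IsDeep k I x (y + 1) (c + 1) := by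
  rcases h with h | h | h
  · exact ⟨.inl (by omega), .inl (by omega)⟩
  · exact ⟨.inr (.inl (by omega)), .inr (.inl (by omega))⟩
  · exact hI.isDeep_of_pentagramCell_mem (hI.pentagramCell_succ_mem h)

lemma isDeep_idealDepth (k : ℤ) (I : Finset (ℤ × ℤ × ℤ)) (x y : ℕ) :
    IsDeep k I x y (idealDepth k I x y) :=
  Nat.sInf_mem (s := {c | IsDeep k I x y c}) ⟨x, .inl le_rfl⟩

lemma idealDepth_le_iff (hI : IsCoverIdeal (pentagramPFinset k) pentagramCovers I) :
    idealDepth k I x y ≤ c ↔ IsDeep k I x y c := by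
  refine ⟨fun h => ?_, fun h => Nat.sInf_le h⟩
  induction c, h using Nat.le_induction with
  | base => exact isDeep_idealDepth k I x y
  | succ c _ ih => exact (ih.succ_and_succ hI).1.of_succ_left hI

lemma IsCoverIdeal.hasDepths_idealDepth
    (hI : IsCoverIdeal (pentagramPFinset k) pentagramCovers I) :
    HasDepths k I (idealDepth k I) := by
  intro x y c h
  have := pentagramPoint_mem_pentagramQ.1 h
  rw [idealDepth_le_iff hI, IsDeep, or_iff_right (by omega), or_iff_right (by omega)]

lemma IsCoverIdeal.isCornerSum_idealDepth
    (hI : IsCoverIdeal (pentagramPFinset N) pentagramCovers I) :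
    IsCornerSum N (idealDepth N I) := by
  have hlast : ∀ x y, x ≤ N ∧ y = N ∨ x = N ∧ y ≤ N → idealDepth N I x y = min x y := by
    intro x y hxy
    refine le_antisymm (le_min (Nat.sInf_le (.inl le_rfl)) (Nat.sInf_le (.inr (.inl le_rfl)))) ?_
    rcases isDeep_idealDepth N I x y with h | h | h
    · exact min_le_of_left_le h
    · exact min_le_of_right_le h
    · have := pentagramPoint_mem_pentagramPFinset.1 (hI.1 h)
      omega
  refine ⟨fun y _ => Nat.le_zero.1 (Nat.sInf_le (.inl le_rfl)),
    fun x _ => Nat.le_zero.1 (Nat.sInf_le (.inr (.inl le_rfl))),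
    fun y hy => by rw [hlast N y (.inr ⟨rfl, hy⟩), min_eq_right hy],
    fun x hx => by rw [hlast x N (.inl ⟨hx, rfl⟩), min_eq_left hx],
    fun x _ y _ => Nat.le_and_le_add_one_iff.1 ⟨?_, ?_⟩,
    fun x _ y _ => Nat.le_and_le_add_one_iff.1 ⟨?_, ?_⟩⟩ <;> rw [idealDepth_le_iff hI]
  · exact (isDeep_idealDepth N I _ _).of_succ_left hI
  · exact ((isDeep_idealDepth N I _ _).succ_and_succ hI).1
  · exact (isDeep_idealDepth N I _ _).of_succ_right hI
  · exact ((isDeep_idealDepth N I _ _).succ_and_succ hI).2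

/-- The greatest order ideal with depths `C`, when `C` is a corner sum: the elements of `Q_k` of
depth at least `C x y`, and the elements of `Q_{k+1}` which cover only such elements. -/
def depthIdeal (k : ℤ) (C : ℕ → ℕ → ℕ) : Finset (ℤ × ℤ × ℤ) :=
  (pentagramPFinset k).filter fun p =>
    (∀ x y c, p = pentagramPoint k x y c → p ∈ pentagramQ k → C x y ≤ c) ∧
    ∀ x y d, p = pentagramCell k x y d → C (x + 1) y ≤ d ∧ C x (y + 1) ≤ d

lemma pentagramPoint_mem_depthIdeal_iff (h : pentagramPoint k x y c ∈ pentagramQ k) :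
    pentagramPoint k x y c ∈ depthIdeal k C ↔ C x y ≤ c := by
  rw [depthIdeal, Finset.mem_filter, and_iff_right (mem_pentagramPFinset.2 (.inl h))]
  refine ⟨fun hC => hC.1 x y c rfl h, fun hC => ⟨fun x' y' c' heq _ => ?_, fun x' y' d heq => ?_⟩⟩
  · obtain ⟨rfl, rfl, rfl⟩ := pentagramPoint_injective heq
    exact hC
  · exact absurd (heq ▸ h) pentagramCell_notMem_pentagramQ

lemma pentagramCell_mem_depthIdeal_iff (h : pentagramCell k x y d ∈ pentagramPFinset k) :
    pentagramCell k x y d ∈ depthIdeal k C ↔ C (x + 1) y ≤ d ∧ C x (y + 1) ≤ d := by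
  rw [depthIdeal, Finset.mem_filter, and_iff_right h]
  refine ⟨fun hC => hC.2 x y d rfl, fun hC => ⟨fun x' y' c' _ hQ => ?_, fun x' y' d' heq => ?_⟩⟩
  · exact absurd hQ pentagramCell_notMem_pentagramQ
  · obtain ⟨rfl, rfl, rfl⟩ := pentagramCell_injective heq
    exact hC

lemma IsCornerSum.isCoverIdeal_depthIdeal (hC : IsCornerSum N C) :
    IsCoverIdeal (pentagramPFinset N) pentagramCovers (depthIdeal N C) := by
  refine ⟨Finset.filter_subset _ _, fun p hp q hq hpq => ?_⟩
  have hqP := (Finset.mem_filter.1 hq).1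
  have hbip := mem_pentagramQ_iff_of_pentagramCovers hp hqP hpq
  by_cases hpQ : p ∈ pentagramQ N
  · obtain ⟨x, y, d, rfl⟩ := exists_eq_pentagramCell_of_notMem hqP (hbip.1 hpQ)
    have hdepth := (pentagramCell_mem_depthIdeal_iff hqP).1 hq
    rcases (pentagramCovers_pentagramCell_right hpQ).1 hpq with rfl | rfl
    · exact (pentagramPoint_mem_depthIdeal_iff hpQ).2 hdepth.1
    · exact (pentagramPoint_mem_depthIdeal_iff hpQ).2 hdepth.2
  · have hqQ : q ∈ pentagramQ N := not_not.1 (mt hbip.2 hpQ)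
    obtain ⟨x, y, d, rfl⟩ := exists_eq_pentagramCell_of_notMem hp hpQ
    have hbounds := pentagramCell_mem_pentagramPFinset.1 hp
    rw [pentagramCell_mem_depthIdeal_iff hp]
    rcases (pentagramCovers_pentagramCell_left hqQ).1 hpq with rfl | ⟨c, rfl, rfl⟩ <;>
      have hdepth := (pentagramPoint_mem_depthIdeal_iff hqQ).1 hq
    · have := hC.step_left x (by omega) (y + 1) (by omega)
      have := hC.step_right (x + 1) (by omega) y (by omega)
      omega
    · have := hC.step_left x (by omega) y (by omega)
      have := hC.step_right x (by omega) y (by omega)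
      omega

lemma hasDepths_depthIdeal (k : ℤ) (C : ℕ → ℕ → ℕ) : HasDepths k (depthIdeal k C) C :=
  fun _ _ _ => pentagramPoint_mem_depthIdeal_iff

end Depths

section FreeCells

variable {N : ℕ} {I J : Finset (ℤ × ℤ × ℤ)} {C C' : ℕ → ℕ → ℕ} {x y c d : ℕ}

lemma HasDepths.pentagramPoint_mem_iff (hI : IsCoverIdeal (pentagramPFinset N) pentagramCovers I)
    (hIC : HasDepths N I C) (hC : IsCornerSum N C) (hx : x ≤ N) (hy : y ≤ N) (hcx : c < x)
    (hcy : c < y) : pentagramPoint N x y c ∈ I ↔ C x y ≤ c := by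
  refine ⟨fun h => (hIC x y c ?_).1 h, fun h => (hIC x y c ?_).2 h⟩
  · exact pentagramPoint_mem_pentagramQ.2 (pentagramPoint_mem_pentagramPFinset.1 (hI.1 h))
  · have := hC.add_le hx hy
    exact pentagramPoint_mem_pentagramQ.2 (by omega)

lemma HasDepths.pentagramPoint_mem_of_mem_iff (hIC : HasDepths N I C) (hC : IsCornerSum N C)
    (hx : x ≤ N) (hy : y ≤ N) (hc : x + y ≤ c + N) :
    (pentagramPoint N x y c ∈ pentagramQ N → pentagramPoint N x y c ∈ I) ↔ C x y ≤ c := by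
  by_cases h : pentagramPoint N x y c ∈ pentagramQ N
  · rw [imp_iff_right h, hIC x y c h]
  · rw [imp_iff_not_or, iff_true_left (.inl h)]
    rw [pentagramPoint_mem_pentagramQ] at h
    have := hC.le_left hx hy
    have := hC.le_right hx hy
    omega

lemma HasDepths.pentagramCell_mem_maxIdeal_iff (hIC : HasDepths N I C) (hC : IsCornerSum N C)
    (hP : pentagramCell N x y d ∈ pentagramPFinset N) :
    pentagramCell N x y d ∈ maxIdeal (pentagramPFinset N) (pentagramQ N) pentagramCovers I ↔
      C (x + 1) y ≤ d ∧ C x (y + 1) ≤ d := by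
  have hbounds := pentagramCell_mem_pentagramPFinset.1 hP
  rw [← hIC.pentagramPoint_mem_of_mem_iff hC (x := x + 1) (by omega) (by omega) (by omega),
    ← hIC.pentagramPoint_mem_of_mem_iff hC (y := y + 1) (by omega) (by omega) (by omega),
    maxIdeal, Finset.mem_filter, and_iff_right hP,
    and_iff_right fun h => absurd h pentagramCell_notMem_pentagramQ,
    imp_iff_right pentagramCell_notMem_pentagramQ]
  constructor
  · refine fun h => ⟨fun hQ => h _ ?_ ?_, fun hQ => h _ ?_ ?_⟩
    · exact mem_pentagramPFinset.2 (.inl hQ)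
    · exact (pentagramCovers_pentagramCell_right hQ).2 (.inl rfl)
    · exact mem_pentagramPFinset.2 (.inl hQ)
    · exact (pentagramCovers_pentagramCell_right hQ).2 (.inr rfl)
  · intro h q hq hcov
    have hqQ := (mem_pentagramQ_iff_of_pentagramCovers hq hP hcov).2
      pentagramCell_notMem_pentagramQ
    rcases (pentagramCovers_pentagramCell_right hqQ).1 hcov with rfl | rfl
    · exact h.1 hqQ
    · exact h.2 hqQ

lemma IsCoverIdeal.pentagramCell_mem_minIdeal_iff
    (hI : IsCoverIdeal (pentagramPFinset N) pentagramCovers I) :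
    pentagramCell N x y d ∈ minIdeal (pentagramQ N) pentagramCovers I ↔
      pentagramPoint N (x + 1) (y + 1) d ∈ I ∨ ∃ c, d = c + 1 ∧ pentagramPoint N x y c ∈ I := by
  have hQ : ∀ {x y c}, pentagramPoint N x y c ∈ I → pentagramPoint N x y c ∈ pentagramQ N :=
    fun h => pentagramPoint_mem_pentagramQ.2 (pentagramPoint_mem_pentagramPFinset.1 (hI.1 h))
  rw [minIdeal, Finset.mem_filter, or_iff_right pentagramCell_notMem_pentagramQ]
  constructor
  · rintro ⟨hcell, q, hq, hcov⟩
    have hqQ : q ∈ pentagramQ N := not_not.1 (mt (mem_pentagramQ_iff_of_pentagramCovers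
      (hI.1 hcell) (hI.1 hq) hcov).2 pentagramCell_notMem_pentagramQ)
    rcases (pentagramCovers_pentagramCell_left hqQ).1 hcov with rfl | ⟨c, hd, rfl⟩
    · exact .inl hq
    · exact .inr ⟨c, hd, hq⟩
  · rintro (h | ⟨c, rfl, h⟩)
    · exact ⟨hI.pentagramCell_mem h, _, h,
        (pentagramCovers_pentagramCell_left (hQ h)).2 (.inl rfl)⟩
    · exact ⟨hI.pentagramCell_succ_mem h, _, h,
        (pentagramCovers_pentagramCell_left (hQ h)).2 (.inr ⟨c, rfl, rfl⟩)⟩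

lemma HasDepths.pentagramCell_mem_minIdeal_iff
    (hI : IsCoverIdeal (pentagramPFinset N) pentagramCovers I) (hIC : HasDepths N I C)
    (hC : IsCornerSum N C) (hP : pentagramCell N x y d ∈ pentagramPFinset N) :
    pentagramCell N x y d ∈ minIdeal (pentagramQ N) pentagramCovers I ↔
      C (x + 1) (y + 1) ≤ d ∨ C x y < d := by
  have hbounds := pentagramCell_mem_pentagramPFinset.1 hP
  rw [hI.pentagramCell_mem_minIdeal_iff,
    hIC.pentagramPoint_mem_iff hI hC (by omega) (by omega) (by omega) (by omega)]
  refine or_congr_right ⟨?_, fun h => ⟨d - 1, by omega, ?_⟩⟩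
  · rintro ⟨c, rfl, h⟩
    rw [hIC.pentagramPoint_mem_iff hI hC (by omega) (by omega) (by omega) (by omega)] at h
    omega
  · rw [hIC.pentagramPoint_mem_iff hI hC (by omega) (by omega) (by omega) (by omega)]
    omega

lemma HasDepths.pentagramCell_mem_freeSet_iff
    (hI : IsCoverIdeal (pentagramPFinset N) pentagramCovers I) (hIC : HasDepths N I C)
    (hC : IsCornerSum N C) (hP : pentagramCell N x y d ∈ pentagramPFinset N) :
    pentagramCell N x y d ∈ freeSet (pentagramPFinset N) (pentagramQ N) pentagramCovers I ↔
      cornerEntry C x y = 1 ∧ d = C x y := by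
  have hbounds := pentagramCell_mem_pentagramPFinset.1 hP
  have hx : x < N := by omega
  have hy : y < N := by omega
  rw [freeSet, Finset.mem_sdiff, hIC.pentagramCell_mem_maxIdeal_iff hC hP,
    hIC.pentagramCell_mem_minIdeal_iff hI hC hP, hC.cornerEntry_eq_one_iff hx hy]
  have := hC.step_left x hx y hy.le
  have := hC.step_right x hx.le y hy
  have := hC.step_left x hx (y + 1) hy
  omega

lemma IsCornerSum.pentagramCell_mem_pentagramPFinset (hC : IsCornerSum N C) (hx : x < N)
    (hy : y < N) (h : cornerEntry C x y = 1) :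
    pentagramCell N x y (C x y) ∈ pentagramPFinset N := by
  have := (hC.cornerEntry_eq_one_iff hx hy).1 h
  have := hC.add_le (x := x + 1) (y := y + 1) hx hy
  have := hC.le_left hx.le hy.le
  have := hC.le_right hx.le hy.le
  exact _root_.pentagramCell_mem_pentagramPFinset.2 (by omega)

lemma HasDepths.freeSet_eq (hI : IsCoverIdeal (pentagramPFinset N) pentagramCovers I)
    (hIC : HasDepths N I C) (hC : IsCornerSum N C) :
    freeSet (pentagramPFinset N) (pentagramQ N) pentagramCovers I =
      (onePositions N C).image fun p => pentagramCell N p.1 p.2 (C p.1 p.2) := by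
  ext p
  simp only [Finset.mem_image, Prod.exists, mem_onePositions]
  constructor
  · intro hp
    have hP := (Finset.mem_filter.1 (Finset.mem_sdiff.1 hp).1).1
    obtain ⟨x, y, d, rfl⟩ :=
      exists_eq_pentagramCell_of_notMem hP fun hQ => notMem_freeSet_of_mem hQ hp
    obtain ⟨hone, rfl⟩ := (hIC.pentagramCell_mem_freeSet_iff hI hC hP).1 hp
    have hbounds := pentagramCell_mem_pentagramPFinset.1 hP
    exact ⟨x, y, ⟨by omega, by omega, hone⟩, rfl⟩
  · rintro ⟨x, y, ⟨hx, hy, hone⟩, rfl⟩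
    exact (hIC.pentagramCell_mem_freeSet_iff hI hC
      (hC.pentagramCell_mem_pentagramPFinset hx hy hone)).2 ⟨hone, rfl⟩

lemma HasDepths.filter_mem_pentagramQ_eq (hIC : HasDepths N I C) (hJC : HasDepths N J C')
    (h : ∀ x ≤ N, ∀ y ≤ N, C x y = C' x y) :
    I.filter (· ∈ pentagramQ N) = J.filter (· ∈ pentagramQ N) := by
  ext p
  rw [Finset.mem_filter, Finset.mem_filter, and_congr_left_iff]
  intro hp
  obtain ⟨x, y, c, rfl⟩ := exists_eq_pentagramPoint hp
  have := pentagramPoint_mem_pentagramQ.1 hp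
  rw [hIC x y c hp, hJC x y c hp, h x (by omega) y (by omega)]

end FreeCells

section WeightedSums

variable {R : Type*} [CommRing R] {g : ℤ × ℤ × ℤ → R}

lemma sum_prod_isPentagramOrderIdeal_eq {N : ℕ} {C : ℕ → ℕ → ℕ} (hC : IsCornerSum N C)
    (huniq : ∀ C', IsCornerSum N C' →
      (∀ p ∈ onePositions N C', g (pentagramCell N p.1 p.2 (C' p.1 p.2)) ≠ -1) →
      ∀ x ≤ N, ∀ y ≤ N, C' x y = C x y) :
    ∑ I ∈ (pentagramPFinset N).powerset.filter
        (fun I : Finset (ℤ × ℤ × ℤ) => IsPentagramOrderIdeal N (I : Set (ℤ × ℤ × ℤ))),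
        ∏ p ∈ I, g p =
      (∏ p ∈ minIdeal (pentagramQ N) pentagramCovers (depthIdeal N C), g p) *
        ∏ p ∈ onePositions N C, (1 + g (pentagramCell N p.1 p.2 (C p.1 p.2))) := by
  have hJ := hC.isCoverIdeal_depthIdeal
  have hJC := hasDepths_depthIdeal N C
  simp only [isPentagramOrderIdeal_iff]
  rw [sum_prod_of_forall_trace_eq (Q := pentagramQ N)
    (fun p hp q hq => mem_pentagramQ_iff_of_pentagramCovers hp hq) hJ, hJC.freeSet_eq hJ hC,
    Finset.prod_image]
  · intro p _ q _ hpq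
    obtain ⟨hx, hy, -⟩ := pentagramCell_injective hpq
    exact Prod.ext hx hy
  · intro I hI hne
    have hdepths := hI.hasDepths_idealDepth
    rw [hdepths.freeSet_eq hI hI.isCornerSum_idealDepth, Finset.forall_mem_image] at hne
    exact hdepths.filter_mem_pentagramQ_eq hJC (huniq _ hI.isCornerSum_idealDepth hne)

lemma exists_sum_prod_isPentagramOrderIdeal_eq_mul_pow {n x₀ y₀ : ℕ} {Z : ℕ → ℕ → Prop} {w : R}
    (hrow : IsRowPattern n Z x₀ y₀) (hcol : IsRowPattern n (Function.swap Z) y₀ x₀)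
    (hpos : ∀ x y d, Z x y → g (pentagramCell (n + 1) x y d) = w)
    (hneg : ∀ x y d, ¬Z x y → g (pentagramCell (n + 1) x y d) = -1) :
    ∃ S, ∑ I ∈ (pentagramPFinset (n + 1)).powerset.filter
        (fun I : Finset (ℤ × ℤ × ℤ) => IsPentagramOrderIdeal (n + 1) (I : Set (ℤ × ℤ × ℤ))),
        ∏ p ∈ I, g p = (∏ p ∈ S, g p) * (1 + w) ^ (n + 2) := by
  obtain ⟨C, hC, hones⟩ := exists_isCornerSum_of_isRowPattern hrow hcol
  have hZ : ∀ p ∈ onePositions (n + 1) C, Z p.1 p.2 := fun p hp => by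
    rw [hones, Finset.mem_filter] at hp
    exact hp.2
  have hsum := sum_prod_isPentagramOrderIdeal_eq (g := g) hC fun C' hC' hne x hx y hy =>
    hrow.cornerSum_unique hC' hC
      (fun p hp => by
        by_contra hZp
        exact hne p hp (by exact_mod_cast hneg p.1 p.2 (C' p.1 p.2) hZp)) hZ hx hy
  refine ⟨minIdeal (pentagramQ ↑(n + 1)) pentagramCovers (depthIdeal ↑(n + 1) C), ?_⟩
  rw [← card_filter_eq_of_isRowPattern hrow hcol, ← hones, ← Finset.prod_const]
  push_cast at hsum ⊢
  rw [hsum]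
  exact congrArg _ (Finset.prod_congr rfl fun p hp => by rw [hpos _ _ _ (hZ p hp)])

end WeightedSums

lemma exists_prod_eq_signed_monomial {ι σ : Type*} (s : Finset ι) {g : ι → MvPolynomial σ ℤ}
    (hg : ∀ p, g p = -1 ∨ ∃ a, g p = X a) :
    ∃ (ε : ℤ) (d : σ →₀ ℕ), (ε = 1 ∨ ε = -1) ∧ ∏ p ∈ s, g p = C ε * monomial d 1 := by
  induction s using Finset.induction_on with
  | empty => exact ⟨1, 0, .inl rfl, by simp⟩
  | insert p s hp ih =>
    obtain ⟨ε, d, hε, hprod⟩ := ih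
    rw [Finset.prod_insert hp, hprod]
    rcases hg p with h | ⟨a, h⟩
    · exact ⟨-ε, d, by omega, by rw [h, C_neg]; ring⟩
    · refine ⟨ε, Finsupp.single a 1 + d, hε, ?_⟩
      rw [h, X, mul_left_comm, monomial_mul, one_mul]

lemma pentagramPhi_pentagramR_X (n : ℕ) (i : ℤ) :
    pentagramPhi n (pentagramR n (X i)) =
      if 2 ≤ (i : ZMod (2 * n)).val ∧ (i : ZMod (2 * n)).val ≤ 2 * n - 2 ∧
        2 ∣ (i : ZMod (2 * n)).val then -1 else X (i : ZMod (2 * n)) := by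
  simp only [pentagramPhi, pentagramR, AlgHom.toRingHom_eq_coe, RingHom.coe_coe, aeval_X]

lemma pentagramPhi_pentagramR_X_eq_or (n : ℕ) (i : ℤ) :
    pentagramPhi n (pentagramR n (X i)) = -1 ∨ ∃ a, pentagramPhi n (pentagramR n (X i)) = X a := by
  rw [pentagramPhi_pentagramR_X]
  exact (ite_eq_or_eq _ _ _).imp_right fun h => ⟨_, h⟩

lemma pentagramPhi_pentagramR_X_two_mul {n : ℕ} (hn : 0 < n) (i : ℤ) :
    pentagramPhi n (pentagramR n (X (2 * i))) = if (n : ℤ) ∣ i then X 0 else -1 := by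
  have : NeZero (2 * n) := ⟨by omega⟩
  have hval : (((2 * i : ℤ) : ZMod (2 * n)).val : ℤ) = 2 * (i % n) := by
    rw [ZMod.val_intCast, Nat.cast_mul, Nat.cast_two, Int.mul_emod_mul_of_pos _ _ two_pos]
  have := Int.emod_nonneg i (by omega : (n : ℤ) ≠ 0)
  have := Int.emod_lt_of_pos i (by omega : (0 : ℤ) < n)
  rw [pentagramPhi_pentagramR_X]
  by_cases hi : (n : ℤ) ∣ i
  · have := Int.emod_eq_zero_of_dvd hi
    have hzero : ((2 * i : ℤ) : ZMod (2 * n)) = 0 := (ZMod.val_eq_zero _).1 (by omega)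
    rw [if_neg (by omega), if_pos hi, hzero]
  · have := mt Int.dvd_of_emod_eq_zero hi
    rw [if_pos (by omega), if_neg hi]

lemma pentagramPhi_pentagramR_X_pentagramCell {n : ℕ} (hn : 0 < n) (m : ℤ) (x y d : ℕ) :
    pentagramPhi n (pentagramR n (X (3 * (pentagramCell (n + 1) x y d).1 +
      (pentagramCell (n + 1) x y d).2.1 + (n + 2 * m)))) =
      if (n : ℤ) ∣ 2 * x + 1 * y + m then X 0 else -1 := by
  have hindex : 3 * (pentagramCell (n + 1) x y d).1 + (pentagramCell (n + 1) x y d).2.1 +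
      (n + 2 * m) = 2 * (2 * x + 1 * y + m - n) := by
    simp only [pentagramCell, pentagramPoint]
    push_cast
    ring
  rw [hindex, pentagramPhi_pentagramR_X_two_mul hn]
  exact if_congr dvd_sub_self_right rfl rfl

theorem stmt13 (n : ℕ) (hn : 3 ≤ n) (hodd : Odd (n : ℤ)) (j : ℤ) (hj : Odd j)
    (hjn : ¬ (2 * (n : ℤ)) ∣ (j - n)) :
    ∃ (ε : ℤ) (d : ZMod (2 * n) →₀ ℕ), (ε = 1 ∨ ε = -1) ∧
      pentagramPhi n (pentagramR n (pentagramF j (n + 1))) =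
        C ε * monomial d 1 * (1 + X (0 : ZMod (2 * n))) ^ (n + 2) := by
  obtain ⟨m, hjm⟩ := (hj.sub_odd hodd).two_dvd
  obtain rfl : j = n + 2 * m := by omega
  have hm : ¬(n : ℤ) ∣ m := fun h => hjn (by
    rw [add_sub_cancel_left]
    exact mul_dvd_mul_left 2 h)
  obtain ⟨x₀, y₀, hrow, hcol⟩ := exists_isRowPattern_of_not_dvd (n := n) (by omega)
    (Int.isCoprime_two_left.2 hodd) isCoprime_one_left hm
  have hcell := pentagramPhi_pentagramR_X_pentagramCell (n := n) (by omega) m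
  obtain ⟨S, hS⟩ := exists_sum_prod_isPentagramOrderIdeal_eq_mul_pow hrow hcol
    (g := fun p => pentagramPhi n (pentagramR n (X (3 * p.1 + p.2.1 + (n + 2 * m)))))
    (fun x y d h => (hcell x y d).trans (if_pos h)) fun x y d h => (hcell x y d).trans (if_neg h)
  obtain ⟨ε, d, hε, hprod⟩ := exists_prod_eq_signed_monomial S fun p =>
    pentagramPhi_pentagramR_X_eq_or n (3 * p.1 + p.2.1 + (n + 2 * m))
  refine ⟨ε, d, hε, ?_⟩
  rw [pentagramF, map_sum, map_sum, ← hprod, ← hS]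
  simp only [map_prod]

end
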